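/- arXiv:1407.4338 — 6 statements merged into one kernel-verified Lean document; each statement's English description precedes it below -/
import Mathlib

section
/- Characterization of finite Hausdorff distance (forward direction of the main theorem, in the branch–graph model): Let m ≥ 1 and work in ℂ × (Fin m → ℂ) with any fixed norm. Let I and J be nonempty finite index sets. Let C = K ∪ ⋃_{i∈I} B_i and C' = K' ∪ ⋃_{j∈J} B'_j, where K and K' are bounded subsets, B_i = {(z, r_i(z)) : z ∈ ℂ, |z| ≥ M_i} with r_i : ℂ → (Fin m → ℂ) continuous on {z : |z| ≥ M_i}, and B'_j = {(z, r'_j(z)) : z ∈ ℂ, |z| ≥ M'_j} with r'_j continuous on {z : |z| ≥ M'_j}. Assume that for every i ∈ I there exist j ∈ J and constants c, R ∈ ℝ such that ‖r_i(z) − r'_j(z)‖ ≤ c for all z ∈ ℂ with |z| ≥ R, and symmetrically that for every j ∈ J there exist i ∈ I and constants c, R with ‖r_i(z) − r'_j(z)‖ ≤ c for all |z| ≥ R. Then the Hausdorff distance between C and C' is finite, i.e. EMetric.hausdorffEdist C C' ≠ ⊤. -/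
/-!
The Hausdorff distance is the larger of two one-sided excesses `sup_{x ∈ A} d(x, B)`, and an excess
is finite over a finite union as soon as it is finite over each piece. A bounded piece has finite
excess over any nonempty set. By continuity and properness of the base, an infinity branch is the
union of a bounded piece and its part over `{z | R ≤ ‖z‖}`; for `R` large, that part lies vertically
within bounded distance of a non-divergent branch of the other curve.
-/

open Bornology Metric Set
open scoped ENNReal

section Excess

variable {X : Type*}

/-- The one-sided Hausdorff distance from `A` to `B`, valued in `ℝ≥0∞`; it is `⊤` when `B` is empty
and `A` is not. -/
noncomputable def hausdorffExcess [PseudoEMetricSpace X] (A B : Set X) : ℝ≥0∞ :=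
  ⨆ x ∈ A, infEDist x B

section PseudoEMetricSpace

variable [PseudoEMetricSpace X] {A A' B B' : Set X}

theorem hausdorffEDist_eq_max_hausdorffExcess (A B : Set X) :
    hausdorffEDist A B = max (hausdorffExcess A B) (hausdorffExcess B A) :=
  hausdorffEDist_def A B

theorem hausdorffExcess_le_of_mem_edist {d : ℝ≥0∞} (h : ∀ x ∈ A, ∃ y ∈ B, edist x y ≤ d) :
    hausdorffExcess A B ≤ d :=
  iSup₂_le fun x hx ↦
    let ⟨_, hy, hxy⟩ := h x hx
    (infEDist_le_edist_of_mem hy).trans hxy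

theorem hausdorffExcess_mono_left (h : A ⊆ A') : hausdorffExcess A B ≤ hausdorffExcess A' B :=
  biSup_mono h

theorem hausdorffExcess_anti_right (h : B ⊆ B') : hausdorffExcess A B' ≤ hausdorffExcess A B :=
  iSup₂_mono fun _ _ ↦ infEDist_anti h

theorem hausdorffExcess_union (A A' B : Set X) :
    hausdorffExcess (A ∪ A') B = max (hausdorffExcess A B) (hausdorffExcess A' B) :=
  iSup_union

theorem hausdorffExcess_iUnion {ι : Sort*} (A : ι → Set X) (B : Set X) :
    hausdorffExcess (⋃ i, A i) B = ⨆ i, hausdorffExcess (A i) B :=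
  iSup_iUnion A _

theorem hausdorffExcess_union_ne_top (h : hausdorffExcess A B ≠ ⊤) (h' : hausdorffExcess A' B ≠ ⊤) :
    hausdorffExcess (A ∪ A') B ≠ ⊤ :=
  hausdorffExcess_union A A' B ▸ (max_lt h.lt_top h'.lt_top).ne

theorem hausdorffExcess_iUnion_ne_top {ι : Type*} [Finite ι] {A : ι → Set X}
    (h : ∀ i, hausdorffExcess (A i) B ≠ ⊤) : hausdorffExcess (⋃ i, A i) B ≠ ⊤ :=
  hausdorffExcess_iUnion A B ▸ iSup_ne_top h

end PseudoEMetricSpace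

theorem hausdorffExcess_ne_top_of_isBounded [PseudoMetricSpace X] {A B : Set X} (hA : IsBounded A)
    (hB : B.Nonempty) : hausdorffExcess A B ≠ ⊤ := by
  obtain ⟨b, hb⟩ := hB
  obtain ⟨d, hd⟩ := hA.subset_closedBall b
  refine ne_top_of_le_ne_top (ENNReal.ofReal_ne_top (r := d)) ?_
  exact hausdorffExcess_le_of_mem_edist fun x hx ↦
    ⟨b, hb, edist_dist x b ▸ ENNReal.ofReal_le_ofReal (hd hx)⟩

end Excess

section InfinityBranch

variable {E F : Type*} [SeminormedAddCommGroup E] {r r' : E → F} {M M' R : ℝ}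

/-- The infinity branch with leaf parametrization `r`: the graph of `r` over `{z | M ≤ ‖z‖}`. -/
def infinityBranch (r : E → F) (M : ℝ) : Set (E × F) :=
  {p | ∃ z, M ≤ ‖z‖ ∧ p = (z, r z)}

theorem infinityBranch_nonempty [(cobounded E).NeBot] (r : E → F) (M : ℝ) :
    (infinityBranch r M).Nonempty :=
  let ⟨z, hz⟩ := (tendsto_norm_cobounded_atTop.eventually_ge_atTop M).exists
  ⟨(z, r z), z, hz, rfl⟩

theorem infinityBranch_anti (h : M ≤ R) : infinityBranch r R ⊆ infinityBranch r M := by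
  rintro _ ⟨z, hz, rfl⟩
  exact ⟨z, h.trans hz, rfl⟩

theorem isBounded_infinityBranch_sdiff [ProperSpace E] [PseudoMetricSpace F]
    (hr : ContinuousOn r {z | M ≤ ‖z‖}) (R : ℝ) :
    IsBounded (infinityBranch r M \ infinityBranch r R) := by
  have hcompact : IsCompact ({z : E | M ≤ ‖z‖} ∩ closedBall 0 R) :=
    (isCompact_closedBall 0 R).inter_left (isClosed_le continuous_const continuous_norm)
  have hgraph : ContinuousOn (fun z ↦ (z, r z)) ({z : E | M ≤ ‖z‖} ∩ closedBall 0 R) :=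
    continuousOn_id.prodMk (hr.mono inter_subset_left)
  refine (hcompact.image_of_continuousOn hgraph).isBounded.subset ?_
  rintro _ ⟨⟨z, hMz, rfl⟩, hz⟩
  have hzR : ‖z‖ ≤ R := le_of_not_ge fun hRz ↦ hz ⟨z, hRz, rfl⟩
  exact ⟨z, ⟨hMz, mem_closedBall_zero_iff.2 hzR⟩, rfl⟩

variable [SeminormedAddCommGroup F]

/-- Non-divergence of the infinity branches parametrized by `r` and `r'`. It only involves
the behavior at infinity, so the radii from which the branches are defined do not appear. -/
def NonDivergent (r r' : E → F) : Prop :=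
  ∃ c R : ℝ, ∀ z, R ≤ ‖z‖ → ‖r z - r' z‖ ≤ c

theorem NonDivergent.symm (h : NonDivergent r r') : NonDivergent r' r := by
  simpa only [NonDivergent, norm_sub_rev] using h

theorem hausdorffExcess_infinityBranch_le {c : ℝ} (h : ∀ z, R ≤ ‖z‖ → ‖r z - r' z‖ ≤ c) :
    hausdorffExcess (infinityBranch r R) (infinityBranch r' R) ≤ ENNReal.ofReal c := by
  refine hausdorffExcess_le_of_mem_edist ?_
  rintro _ ⟨z, hz, rfl⟩
  refine ⟨(z, r' z), ⟨z, hz, rfl⟩, ?_⟩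
  calc edist (z, r z) (z, r' z) = edist (r z) (r' z) := by simp [Prod.edist_eq]
    _ = ENNReal.ofReal ‖r z - r' z‖ := by rw [edist_dist, dist_eq_norm]
    _ ≤ ENNReal.ofReal c := ENNReal.ofReal_le_ofReal (h z hz)

theorem NonDivergent.hausdorffExcess_infinityBranch_ne_top [ProperSpace E] (h : NonDivergent r r')
    (hr : ContinuousOn r {z | M ≤ ‖z‖}) {B : Set (E × F)} (hB : B.Nonempty)
    (hr'B : infinityBranch r' M' ⊆ B) : hausdorffExcess (infinityBranch r M) B ≠ ⊤ := by
  obtain ⟨c, R, hc⟩ := h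
  set R' := max R M'
  have hbounded : hausdorffExcess (infinityBranch r M \ infinityBranch r R') B ≠ ⊤ :=
    hausdorffExcess_ne_top_of_isBounded (isBounded_infinityBranch_sdiff hr R') hB
  have htail : hausdorffExcess (infinityBranch r R') B ≠ ⊤ := by
    refine ne_top_of_le_ne_top (ENNReal.ofReal_ne_top (r := c)) ?_
    calc hausdorffExcess (infinityBranch r R') B
        ≤ hausdorffExcess (infinityBranch r R') (infinityBranch r' R') :=
          hausdorffExcess_anti_right ((infinityBranch_anti (le_max_right R M')).trans hr'B)
      _ ≤ ENNReal.ofReal c :=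
          hausdorffExcess_infinityBranch_le fun z hz ↦ hc z ((le_max_left R M').trans hz)
  exact ne_top_of_le_ne_top (hausdorffExcess_union_ne_top hbounded htail)
    (hausdorffExcess_mono_left (subset_sdiff_union _ _))

end InfinityBranch

section CurveOfBranches

variable {E F I J : Type*} [SeminormedAddCommGroup E]
  {K K' : Set (E × F)} {r : I → E → F} {M : I → ℝ} {r' : J → E → F} {M' : J → ℝ}

/-- The branch–graph model of a curve: a set `K`, bounded in the applications, together with
the infinity branches parametrized by the `r i`. -/
def curveOfBranches (K : Set (E × F)) (r : I → E → F) (M : I → ℝ) : Set (E × F) :=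
  K ∪ ⋃ i, infinityBranch (r i) (M i)

theorem infinityBranch_subset_curveOfBranches (K : Set (E × F)) (r : I → E → F) (M : I → ℝ)
    (i : I) : infinityBranch (r i) (M i) ⊆ curveOfBranches K r M :=
  (subset_iUnion (fun i ↦ infinityBranch (r i) (M i)) i).trans subset_union_right

theorem curveOfBranches_nonempty [(cobounded E).NeBot] [Nonempty I] (K : Set (E × F))
    (r : I → E → F) (M : I → ℝ) : (curveOfBranches K r M).Nonempty :=
  let i := Classical.arbitrary I
  (infinityBranch_nonempty (r i) (M i)).mono (infinityBranch_subset_curveOfBranches K r M i)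

variable [SeminormedAddCommGroup F]

theorem hausdorffExcess_curveOfBranches_ne_top [ProperSpace E] [Finite I] (hK : IsBounded K)
    (hr : ∀ i, ContinuousOn (r i) {z | M i ≤ ‖z‖})
    (hne : (curveOfBranches K' r' M').Nonempty) (h : ∀ i, ∃ j, NonDivergent (r i) (r' j)) :
    hausdorffExcess (curveOfBranches K r M) (curveOfBranches K' r' M') ≠ ⊤ := by
  refine hausdorffExcess_union_ne_top (hausdorffExcess_ne_top_of_isBounded hK hne)
    (hausdorffExcess_iUnion_ne_top fun i ↦ ?_)
  obtain ⟨j, hj⟩ := h i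
  exact hj.hausdorffExcess_infinityBranch_ne_top (hr i) hne
    (infinityBranch_subset_curveOfBranches K' r' M' j)

theorem hausdorff_finite_of_similar_asymptotic_behavior_general [ProperSpace E] [Finite I]
    [Finite J] (hK : IsBounded K) (hK' : IsBounded K')
    (hr : ∀ i, ContinuousOn (r i) {z | M i ≤ ‖z‖})
    (hr' : ∀ j, ContinuousOn (r' j) {z | M' j ≤ ‖z‖})
    (hne : (curveOfBranches K r M).Nonempty) (hne' : (curveOfBranches K' r' M').Nonempty)
    (h : ∀ i, ∃ j, NonDivergent (r i) (r' j)) (h' : ∀ j, ∃ i, NonDivergent (r i) (r' j)) :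
    hausdorffEDist (curveOfBranches K r M) (curveOfBranches K' r' M') ≠ ⊤ := by
  rw [hausdorffEDist_eq_max_hausdorffExcess]
  have hCC' := hausdorffExcess_curveOfBranches_ne_top hK hr hne' h
  have hC'C := hausdorffExcess_curveOfBranches_ne_top hK' hr' hne fun j ↦
    (h' j).imp fun _ hij ↦ hij.symm
  exact (max_lt hCC'.lt_top hC'C.lt_top).ne

end CurveOfBranches

/-- **Forward direction of the main theorem** (branch–graph model):
if every infinity branch of `C` is non-divergent with some infinity branch of `C'`
and reciprocally (i.e. the curves have a similar asymptotic behavior), then the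
Hausdorff distance between `C` and `C'` is finite. -/
theorem hausdorff_finite_of_similar_asymptotic_behavior
    (m : ℕ) (hm : 1 ≤ m)
    (I J : Type) [Fintype I] [Nonempty I] [Fintype J] [Nonempty J]
    (K K' : Set (ℂ × (Fin m → ℂ)))
    (hK : Bornology.IsBounded K) (hK' : Bornology.IsBounded K')
    (r : I → ℂ → (Fin m → ℂ)) (M : I → ℝ)
    (r' : J → ℂ → (Fin m → ℂ)) (M' : J → ℝ)
    (hr : ∀ i : I, ContinuousOn (r i) {z : ℂ | M i ≤ ‖z‖})
    (hr' : ∀ j : J, ContinuousOn (r' j) {z : ℂ | M' j ≤ ‖z‖})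
    (C C' : Set (ℂ × (Fin m → ℂ)))
    (hC : C = K ∪ ⋃ i : I,
      {p : ℂ × (Fin m → ℂ) | ∃ z : ℂ, M i ≤ ‖z‖ ∧ p = (z, r i z)})
    (hC' : C' = K' ∪ ⋃ j : J,
      {p : ℂ × (Fin m → ℂ) | ∃ z : ℂ, M' j ≤ ‖z‖ ∧ p = (z, r' j z)})
    (h1 : ∀ i : I, ∃ j : J, ∃ c R : ℝ, ∀ z : ℂ, R ≤ ‖z‖ → ‖r i z - r' j z‖ ≤ c)
    (h2 : ∀ j : J, ∃ i : I, ∃ c R : ℝ, ∀ z : ℂ, R ≤ ‖z‖ → ‖r i z - r' j z‖ ≤ c) :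
    EMetric.hausdorffEdist C C' ≠ ⊤ := by
  subst hC hC'
  exact hausdorff_finite_of_similar_asymptotic_behavior_general hK hK' hr hr'
    (curveOfBranches_nonempty K r M) (curveOfBranches_nonempty K' r' M') h1 h2
end

section
/- Characterization of finite Hausdorff distance (backward direction of the main theorem, in the branch–graph model): Let m ≥ 1 and work in ℂ × (Fin m → ℂ) with the norm ‖(z,w)‖ = |z| + Σ_{j} |w_j|. Let r : ℂ → (Fin m → ℂ), δ₀, M ∈ ℝ, and suppose each component of r is 1-Lipschitz far from the origin, i.e. |r(x)_j − r(y)_j| ≤ |x − y| for all j ∈ Fin m whenever |x| > δ₀ and |y| > δ₀. Let B = {(z, r(z)) : z ∈ ℂ, |z| > M} and let C be any subset of ℂ × (Fin m → ℂ) containing B. Let J be a finite index set, K' a bounded subset, and for each j ∈ J let r'_j : ℂ → (Fin m → ℂ) and M'_j ∈ ℝ; assume C' ⊆ K' ∪ ⋃_{j∈J} {(y, r'_j(y)) : y ∈ ℂ, |y| > M'_j}, and that for every j ∈ J there exists a component index j₀ ∈ Fin m such that |r'_j(y)_{j₀} − r(y)_{j₀}| → ∞ as |y| → ∞. Then for every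 real K > 0 there exists a point p ∈ B with dist(p, q) > K for every q ∈ C'; consequently EMetric.hausdorffEdist C C' = ⊤. -/
/-!
Call a set remote along a branch `z ↦ (z, r z)` when the distance from `(z, r z)` to it tends to
infinity with `z`. Bounded sets are remote, and finite unions of remote sets are remote. The graph
of a function `r'` diverging from `r` is remote as well: if `(y, r' y)` were within `K` of
`(z, r z)`, then `y` would be within `K` of `z`, hence far out too, and the Lipschitz bound on `r`
would give `dist (r' y) (r y) ≤ K + L * K`, contradicting divergence for `z` far enough.

All of this takes place in the sup metric, which is the one Mathlib puts on products. It is bounded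
above by the `ℓ¹` distance, so remoteness yields the `ℓ¹` estimate too.
-/

open Bornology Filter Metric Set
open scoped NNReal Topology

section Remote

variable {α X : Type*} [PseudoEMetricSpace X] {l : Filter α} {f : α → X} {s t : Set X}

theorem tendsto_infEDist_nhds_top_of_subset (hst : s ⊆ t)
    (ht : Tendsto (fun a ↦ infEDist (f a) t) l (𝓝 ⊤)) :
    Tendsto (fun a ↦ infEDist (f a) s) l (𝓝 ⊤) :=
  tendsto_nhds_top_mono' ht fun _ ↦ infEDist_anti hst

theorem tendsto_infEDist_union_nhds_top (hs : Tendsto (fun a ↦ infEDist (f a) s) l (𝓝 ⊤))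
    (ht : Tendsto (fun a ↦ infEDist (f a) t) l (𝓝 ⊤)) :
    Tendsto (fun a ↦ infEDist (f a) (s ∪ t)) l (𝓝 ⊤) := by
  simpa only [infEDist_union, min_self] using hs.min ht

theorem tendsto_infEDist_iUnion_nhds_top {ι : Type*} [Finite ι] {s : ι → Set X}
    (hs : ∀ i, Tendsto (fun a ↦ infEDist (f a) (s i)) l (𝓝 ⊤)) :
    Tendsto (fun a ↦ infEDist (f a) (⋃ i, s i)) l (𝓝 ⊤) := by
  have := Fintype.ofFinite ι
  simpa only [infEDist_iUnion, ← Finset.inf_univ_eq_iInf, Finset.inf_top] using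
    Tendsto.finset_inf_nhds_apply (s := Finset.univ) fun i _ ↦ hs i

theorem hausdorffEDist_eq_top_of_frequently_mem (hfs : ∃ᶠ a in l, f a ∈ s)
    (hft : Tendsto (fun a ↦ infEDist (f a) t) l (𝓝 ⊤)) : hausdorffEDist s t = ⊤ := by
  refine ENNReal.eq_top_of_forall_nnreal_le fun x ↦ ?_
  obtain ⟨a, has, hxa⟩ :=
    (hfs.and_eventually (ENNReal.tendsto_nhds_top_iff_nnreal.1 hft x)).exists
  exact hxa.le.trans (infEDist_le_hausdorffEDist_of_mem has)

end Remote

section RemoteMetric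

variable {α X : Type*} [PseudoMetricSpace X] {l : Filter α} {f : α → X} {s : Set X}

theorem tendsto_infEDist_nhds_top_iff :
    Tendsto (fun a ↦ infEDist (f a) s) l (𝓝 ⊤) ↔
      ∀ K : ℝ, ∀ᶠ a in l, ∀ q ∈ s, K < dist (f a) q := by
  rw [ENNReal.tendsto_nhds_top_iff_nnreal]
  constructor
  · intro h K
    filter_upwards [h K.toNNReal] with a ha q hq
    have : (K.toNNReal : ENNReal) < edist (f a) q := ha.trans_le (infEDist_le_edist_of_mem hq)
    rw [edist_nndist, ENNReal.coe_lt_coe, ← NNReal.coe_lt_coe] at this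
    exact (Real.le_coe_toNNReal K).trans_lt this
  · intro h x
    filter_upwards [h (x + 1)] with a ha
    have hle : ((x + 1 : ℝ≥0) : ENNReal) ≤ infEDist (f a) s := le_infEDist.2 fun q hq ↦ by
      rw [edist_nndist, ENNReal.coe_le_coe]
      exact_mod_cast (ha q hq).le
    exact (ENNReal.coe_lt_coe.2 (lt_add_one x)).trans_le hle

theorem tendsto_infEDist_nhds_top_of_isBounded (hs : IsBounded s)
    (hf : Tendsto f l (cobounded X)) :
    Tendsto (fun a ↦ infEDist (f a) s) l (𝓝 ⊤) := by
  refine tendsto_infEDist_nhds_top_iff.2 fun K ↦ ?_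
  have hthick : (cthickening K s)ᶜ ∈ cobounded X := isBounded_def.1 hs.cthickening
  filter_upwards [hf hthick] with a ha q hq
  exact lt_of_not_ge fun hle ↦ ha (mem_cthickening_of_dist_le _ q K s hq hle)

end RemoteMetric

theorem tendsto_prodMk_cobounded_of_left {α E F : Type*} [Bornology E] [Bornology F]
    {l : Filter α} {f : α → E} {g : α → F} (hf : Tendsto f l (cobounded E)) :
    Tendsto (fun a ↦ (f a, g a)) l (cobounded (E × F)) := by
  have hfst : Tendsto (fun a ↦ (f a, g a)) l (comap Prod.fst (cobounded E)) :=
    tendsto_comap_iff.2 hf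
  rw [cobounded_prod]
  exact hfst.mono_right le_sup_left

section Graph

variable {E F : Type*} [PseudoMetricSpace E] [PseudoMetricSpace F] {r r' : E → F}

theorem dist_le_of_dist_graph_le {L : ℝ≥0} {U : Set E} (hr : LipschitzOnWith L r U) {y z : E}
    (hy : y ∈ U) (hz : z ∈ U) {K : ℝ} (hK : dist (z, r z) (y, r' y) ≤ K) :
    dist (r' y) (r y) ≤ K + L * K := by
  obtain ⟨hzy, hrz⟩ : dist z y ≤ K ∧ dist (r z) (r' y) ≤ K := max_le_iff.1 hK
  calc
    dist (r' y) (r y) ≤ dist (r z) (r' y) + dist (r z) (r y) := dist_triangle_left _ _ _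
    _ ≤ dist (r z) (r' y) + L * dist z y := by gcongr; exact hr.dist_le_mul z hz y hy
    _ ≤ K + L * K := by gcongr

theorem tendsto_infEDist_graph_nhds_top {L : ℝ≥0} {U : Set E} (hU : U ∈ cobounded E)
    (hr : LipschitzOnWith L r U)
    (hdiv : Tendsto (fun y ↦ dist (r' y) (r y)) (cobounded E) atTop) :
    Tendsto (fun z ↦ infEDist (z, r z) (range fun y ↦ (y, r' y))) (cobounded E) (𝓝 ⊤) := by
  refine tendsto_infEDist_nhds_top_iff.2 fun K ↦ ?_
  let S : Set E := {y | y ∈ U ∧ K + L * K < dist (r' y) (r y)}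
  have hS : S ∈ cobounded E := inter_mem hU (hdiv.eventually_gt_atTop _)
  have hfar : ∀ᶠ z in cobounded E, ∀ y ∈ Sᶜ, K < dist z y :=
    tendsto_infEDist_nhds_top_iff.1
      (tendsto_infEDist_nhds_top_of_isBounded (isBounded_compl_iff.2 hS) tendsto_id) K
  filter_upwards [hU, hfar] with z hzU hz
  rintro _ ⟨y, rfl⟩
  by_cases hy : y ∈ S
  · exact lt_of_not_ge fun hle ↦ hy.2.not_ge (dist_le_of_dist_graph_le hr hy.1 hzU hle)
  · exact (hz y hy).trans_le (le_max_left _ _)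

end Graph

theorem lipschitzOnWith_pi_of_forall {E ι : Type*} {F : ι → Type*} [PseudoEMetricSpace E]
    [Fintype ι] [∀ i, PseudoEMetricSpace (F i)] {L : ℝ≥0} {U : Set E} {r : E → ∀ i, F i}
    (hr : ∀ i, LipschitzOnWith L (fun z ↦ r z i) U) : LipschitzOnWith L r U :=
  fun _ hx _ hy ↦ edist_pi_le_iff.2 fun i ↦ hr i hx hy

section Pi

variable {E ι : Type*} {F : ι → Type*} [PseudoMetricSpace E] [Fintype ι]
  [∀ i, PseudoMetricSpace (F i)]

theorem dist_le_dist_fst_add_sum_dist_snd (p q : E × ∀ i, F i) :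
    dist p q ≤ dist p.1 q.1 + ∑ i, dist (p.2 i) (q.2 i) := by
  have hsnd : dist p.2 q.2 ≤ ∑ i, dist (p.2 i) (q.2 i) :=
    (dist_pi_le_iff (by positivity)).2 fun i ↦
      Finset.single_le_sum (f := fun i ↦ dist (p.2 i) (q.2 i)) (fun _ _ ↦ dist_nonneg)
        (Finset.mem_univ i)
  exact max_le (le_add_of_nonneg_right (by positivity)) (le_add_of_nonneg_of_le dist_nonneg hsnd)

theorem hausdorff_infinite_of_divergent_branch_general {J : Type*} [Finite J]
    {r : E → ∀ i, F i} {r' : J → E → ∀ i, F i} {L : ℝ≥0} {U : Set E}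
    {B C C' K' : Set (E × ∀ i, F i)}
    (hU : U ∈ cobounded E) (hlip : ∀ i, LipschitzOnWith L (fun z ↦ r z i) U)
    (hB : ∃ᶠ z in cobounded E, (z, r z) ∈ B) (hBC : B ⊆ C) (hK' : IsBounded K')
    (hC' : C' ⊆ K' ∪ ⋃ j, range fun y ↦ (y, r' j y))
    (hdiv : ∀ j, ∃ i, Tendsto (fun y ↦ dist (r' j y i) (r y i)) (cobounded E) atTop) :
    (∀ K : ℝ, ∃ p ∈ B, ∀ q ∈ C', K < dist p.1 q.1 + ∑ i, dist (p.2 i) (q.2 i)) ∧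
      hausdorffEDist C C' = ⊤ := by
  have hdiv_sup (j : J) : Tendsto (fun y ↦ dist (r' j y) (r y)) (cobounded E) atTop :=
    let ⟨i, hi⟩ := hdiv j
    tendsto_atTop_mono (fun y ↦ dist_le_pi_dist (r' j y) (r y) i) hi
  have hremote : Tendsto (fun z ↦ infEDist (z, r z) C') (cobounded E) (𝓝 ⊤) :=
    tendsto_infEDist_nhds_top_of_subset hC' <| tendsto_infEDist_union_nhds_top
      (tendsto_infEDist_nhds_top_of_isBounded hK' (tendsto_prodMk_cobounded_of_left tendsto_id))
      (tendsto_infEDist_iUnion_nhds_top fun j ↦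
        tendsto_infEDist_graph_nhds_top hU (lipschitzOnWith_pi_of_forall hlip) (hdiv_sup j))
  refine ⟨fun K ↦ ?_, hausdorffEDist_eq_top_of_frequently_mem (hB.mono fun _ hz ↦ hBC hz) hremote⟩
  obtain ⟨z, hzB, hz⟩ :=
    (hB.and_eventually (tendsto_infEDist_nhds_top_iff.1 hremote K)).exists
  exact ⟨(z, r z), hzB, fun q hq ↦ (hz q hq).trans_le (dist_le_dist_fst_add_sum_dist_snd _ q)⟩

end Pi

/-- **Backward direction of the main theorem** (branch–graph model):
if the infinity branch `B ⊆ C` diverges from every infinity branch of `C'`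
(every point of `C'` with large coordinates lying on one of finitely many branches),
then points of `B` can be found arbitrarily far from every point of `C'`, measured
in the norm `‖(z,w)‖ = |z| + Σ_j |w_j|`; consequently the Hausdorff distance
between `C` and `C'` is infinite. -/
theorem hausdorff_infinite_of_divergent_branch
    (m : ℕ) (hm : 1 ≤ m)
    (r : ℂ → (Fin m → ℂ)) (δ₀ M : ℝ)
    (hlip : ∀ (j : Fin m) (x y : ℂ), δ₀ < ‖x‖ → δ₀ < ‖y‖ →
      ‖r x j - r y j‖ ≤ ‖x - y‖)
    (B : Set (ℂ × (Fin m → ℂ)))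
    (hB : B = {p : ℂ × (Fin m → ℂ) | ∃ z : ℂ, M < ‖z‖ ∧ p = (z, r z)})
    (C : Set (ℂ × (Fin m → ℂ))) (hBC : B ⊆ C)
    (J : Type) [Fintype J]
    (K' : Set (ℂ × (Fin m → ℂ))) (hK' : Bornology.IsBounded K')
    (r' : J → ℂ → (Fin m → ℂ)) (M' : J → ℝ)
    (C' : Set (ℂ × (Fin m → ℂ)))
    (hC' : C' ⊆ K' ∪ ⋃ j : J,
      {p : ℂ × (Fin m → ℂ) | ∃ y : ℂ, M' j < ‖y‖ ∧ p = (y, r' j y)})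
    (hdiv : ∀ j : J, ∃ j₀ : Fin m,
      Filter.Tendsto (fun y : ℂ => ‖r' j y j₀ - r y j₀‖)
        (Filter.comap (norm : ℂ → ℝ) Filter.atTop) Filter.atTop) :
    (∀ K : ℝ, 0 < K → ∃ p ∈ B, ∀ q ∈ C',
      K < ‖p.1 - q.1‖ + ∑ j : Fin m, ‖p.2 j - q.2 j‖) ∧
    EMetric.hausdorffEdist C C' = ⊤ := by
  simp only [← dist_eq_norm, comap_norm_atTop] at hlip hdiv ⊢
  have hfar (R : ℝ) : ∀ᶠ z : ℂ in cobounded ℂ, R < ‖z‖ :=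
    tendsto_norm_cobounded_atTop.eventually_gt_atTop R
  have hlip' (j : Fin m) : LipschitzOnWith 1 (fun z ↦ r z j) {z | δ₀ < ‖z‖} :=
    LipschitzOnWith.mk_one fun x hx y hy ↦ hlip j x y hx hy
  have hB' : ∃ᶠ z in cobounded ℂ, (z, r z) ∈ B :=
    ((hfar M).mono fun z hz ↦ hB ▸ ⟨z, hz, rfl⟩).frequently
  have hC'' : C' ⊆ K' ∪ ⋃ j, range fun y ↦ (y, r' j y) :=
    hC'.trans <| union_subset_union_right _ <| iUnion_mono fun j ↦ by
      rintro _ ⟨y, -, rfl⟩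
      exact mem_range_self y
  obtain ⟨hdist, htop⟩ :=
    hausdorff_infinite_of_divergent_branch_general (hfar δ₀) hlip' hB' hBC hK' hC'' hdiv
  exact ⟨fun K _ ↦ hdist K, htop⟩
end

section
/- Divergence criterion for leaves (Lemma characterizing divergent leaves via the positive-exponent terms): Let a, a' : ℚ → ℂ be finitely supported functions whose supports are contained in {q : 0 ≤ q}, and let g, g' : ℝ → ℂ satisfy g(x) → 0 and g'(x) → 0 as x → ∞. Then |(S_a(x) + g(x)) − (S_{a'}(x) + g'(x))| → ∞ as x → ∞ if and only if the restrictions of a and a' to {q : 0 < q} are not equal (i.e. there exists q > 0 with a(q) ≠ a'(q)). -/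
open Filter

/-- `S a x = Σ_{q ∈ supp a} a(q) · x^q`, the generalized power sum attached to a
finitely supported family of coefficients `a : ℚ →₀ ℂ` (the terms of non-negative
exponent of the parametrization of a leaf of an infinity branch). -/
noncomputable def powerSum (a : ℚ →₀ ℂ) (x : ℝ) : ℂ :=
  ∑ q ∈ a.support, a q * ((x ^ (q : ℝ) : ℝ) : ℂ)

/-!
The difference of the two parametrizations is the power sum with coefficients `a - a'`, up to a
bounded remainder. If no positive exponent survives in `a - a'`, this is `O(1)`. Otherwise it is
asymptotically equivalent to the term of largest exponent, because every other term and the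
remainder are negligible against it, and a single term of positive exponent is unbounded.
-/

open Asymptotics

section SmulConst

variable {α 𝕜 E : Type*} [NormedField 𝕜] [NormedAddCommGroup E] [NormedSpace 𝕜 E]

theorem isBigO_smul_const (f : α → 𝕜) (c : E) (l : Filter α) : (fun x => f x • c) =O[l] f :=
  isBigO_of_le' l fun x => (norm_smul (f x) c).trans_le (mul_comm _ _).le

theorem isTheta_smul_const (f : α → 𝕜) {c : E} (hc : c ≠ 0) (l : Filter α) :
    (fun x => f x • c) =Θ[l] f := by
  simpa only [smul_eq_mul, mul_one] using
    (isTheta_refl f l).smul (isTheta_const_const hc (one_ne_zero' 𝕜))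

end SmulConst

theorem isLittleO_rpow_rpow_atTop {r s : ℝ} (hrs : r < s) :
    (fun x : ℝ => x ^ r) =o[atTop] fun x : ℝ => x ^ s := by
  refine isLittleO_of_tendsto' ?_ ?_
  · filter_upwards [eventually_gt_atTop 0] with x hx hxs
    exact absurd hxs (Real.rpow_pos_of_pos hx s).ne'
  · refine (tendsto_rpow_neg_atTop (sub_pos.2 hrs)).congr' ?_
    filter_upwards [eventually_gt_atTop 0] with x hx
    rw [neg_sub, Real.rpow_sub hx]

theorem isBigO_rpow_rpow_atTop {r s : ℝ} (hrs : r ≤ s) :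
    (fun x : ℝ => x ^ r) =O[atTop] fun x : ℝ => x ^ s := by
  obtain rfl | hlt := hrs.eq_or_lt
  · exact isBigO_refl _ _
  · exact (isLittleO_rpow_rpow_atTop hlt).isBigO

theorem isLittleO_one_rpow_atTop {s : ℝ} (hs : 0 < s) :
    (fun _ : ℝ => (1 : ℝ)) =o[atTop] fun x : ℝ => x ^ s := by
  simpa only [Real.rpow_zero] using isLittleO_rpow_rpow_atTop hs

section RpowSum

variable {ι E : Type*} [NormedAddCommGroup E] [NormedSpace ℝ E]

/-- The generalized power sum `∑ i, x ^ e i • a i` with real exponents `e` and vector coefficients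
`a`. The exponents are given by a function on an index type so that `powerSum` is the case
where this function is the cast `ℚ → ℝ`. -/
noncomputable def rpowSum (e : ι → ℝ) (a : ι →₀ E) (x : ℝ) : E :=
  ∑ i ∈ a.support, x ^ e i • a i

theorem powerSum_eq_rpowSum (a : ℚ →₀ ℂ) (x : ℝ) : powerSum a x = rpowSum (↑) a x :=
  Finset.sum_congr rfl fun _ _ => by rw [Complex.real_smul, mul_comm]

theorem rpowSum_sub (e : ι → ℝ) (a a' : ι →₀ E) (x : ℝ) :
    rpowSum e (a - a') x = rpowSum e a x - rpowSum e a' x :=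
  Finsupp.sum_sub_index (h := fun i c => x ^ e i • c) fun i => smul_sub (x ^ e i)

theorem rpowSum_eq_add_erase (e : ι → ℝ) (a : ι →₀ E) (i : ι) (x : ℝ) :
    rpowSum e a x = x ^ e i • a i + rpowSum e (a.erase i) x :=
  (Finsupp.add_sum_erase' a i (fun j c => x ^ e j • c) fun _ => smul_zero _).symm

variable {e : ι → ℝ} {a : ι →₀ E} {g : ℝ → E}

theorem rpowSum_isBigO_rpow {s : ℝ} (hs : ∀ i ∈ a.support, e i ≤ s) :
    rpowSum e a =O[atTop] fun x : ℝ => x ^ s :=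
  IsBigO.fun_sum fun i hi =>
    (isBigO_smul_const _ (a i) atTop).trans (isBigO_rpow_rpow_atTop (hs i hi))

theorem rpowSum_isLittleO_rpow {s : ℝ} (hs : ∀ i ∈ a.support, e i < s) :
    rpowSum e a =o[atTop] fun x : ℝ => x ^ s :=
  IsLittleO.fun_sum fun i hi =>
    (isBigO_smul_const _ (a i) atTop).trans_isLittleO (isLittleO_rpow_rpow_atTop (hs i hi))

theorem rpowSum_isEquivalent {m : ι} (hm : a m ≠ 0)
    (hlt : ∀ i ∈ a.support, i ≠ m → e i < e m) :
    rpowSum e a ~[atTop] fun x : ℝ => x ^ e m • a m := by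
  classical
  have herase : rpowSum e (a.erase m) =o[atTop] fun x : ℝ => x ^ e m • a m := by
    refine (rpowSum_isLittleO_rpow fun i hi => ?_).trans_isTheta (isTheta_smul_const _ hm _).symm
    rw [Finsupp.support_erase, Finset.mem_erase] at hi
    exact hlt i hi.2 hi.1
  refine (IsEquivalent.refl.add_isLittleO herase).congr_left (.of_eq (funext fun x => ?_))
  exact (rpowSum_eq_add_erase e a m x).symm

theorem not_tendsto_norm_rpowSum_add_atTop (hg : g =O[atTop] fun _ => (1 : ℝ))
    (ha : ∀ i ∈ a.support, e i ≤ 0) :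
    ¬ Tendsto (fun x => ‖rpowSum e a x + g x‖) atTop atTop := by
  have hsum : rpowSum e a =O[atTop] fun _ => (1 : ℝ) := by
    simpa only [Real.rpow_zero] using rpowSum_isBigO_rpow ha
  rw [← isLittleO_one_left_iff ℝ]
  exact fun h => isLittleO_irrefl (.of_forall fun _ => one_ne_zero)
    (h.trans_isBigO (hsum.add hg))

theorem tendsto_norm_rpowSum_add_atTop (he : e.Injective) (hg : g =O[atTop] fun _ => (1 : ℝ))
    {i : ι} (hi : 0 < e i) (hai : a i ≠ 0) :
    Tendsto (fun x => ‖rpowSum e a x + g x‖) atTop atTop := by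
  have hi_mem : i ∈ a.support := Finsupp.mem_support_iff.2 hai
  obtain ⟨m, hm_mem, hmax⟩ := a.support.exists_max_image e ⟨i, hi_mem⟩
  have hm : a m ≠ 0 := Finsupp.mem_support_iff.1 hm_mem
  have hone : (fun _ => (1 : ℝ)) =o[atTop] fun x : ℝ => x ^ e m • a m :=
    (isLittleO_one_rpow_atTop (hi.trans_le (hmax i hi_mem))).trans_isTheta
      (isTheta_smul_const _ hm _).symm
  have hequiv : rpowSum e a + g ~[atTop] fun x : ℝ => x ^ e m • a m :=
    (rpowSum_isEquivalent hm fun j hj hjm => (hmax j hj).lt_of_ne (he.ne hjm)).add_isLittleO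
      (hg.trans_isLittleO hone)
  exact (isLittleO_one_left_iff ℝ).1 (hone.trans_isTheta hequiv.isTheta_symm)

theorem tendsto_norm_rpowSum_add_atTop_iff (he : e.Injective)
    (hg : g =O[atTop] fun _ => (1 : ℝ)) :
    Tendsto (fun x => ‖rpowSum e a x + g x‖) atTop atTop ↔ ∃ i, 0 < e i ∧ a i ≠ 0 := by
  refine ⟨fun h => ?_, fun ⟨i, hi, hai⟩ => tendsto_norm_rpowSum_add_atTop he hg hi hai⟩
  contrapose! h
  exact not_tendsto_norm_rpowSum_add_atTop hg fun i hi =>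
    not_lt.1 fun hpos => Finsupp.mem_support_iff.1 hi (h i hpos)

theorem leaves_diverge_iff_general (he : e.Injective) (a a' : ι →₀ E) (g g' : ℝ → E)
    (hg : (fun x => g x - g' x) =O[atTop] fun _ => (1 : ℝ)) :
    Tendsto (fun x => ‖(rpowSum e a x + g x) - (rpowSum e a' x + g' x)‖) atTop atTop ↔
      ∃ i, 0 < e i ∧ a i ≠ a' i := by
  simp only [add_sub_add_comm, ← rpowSum_sub, tendsto_norm_rpowSum_add_atTop_iff he hg,
    Finsupp.sub_apply, sub_ne_zero]

end RpowSum

/-- **Divergence criterion for leaves**: two leaves, whose parametrizations are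
`S_a + g` and `S_{a'} + g'` with `g, g' → 0` at infinity and `a, a'` supported on
non-negative exponents, diverge (the modulus of their difference tends to `∞`)
if and only if their terms with positive exponent are not the same, i.e. there is
some `q > 0` with `a(q) ≠ a'(q)`. -/
theorem leaves_diverge_iff (a a' : ℚ →₀ ℂ)
    (ha : ↑a.support ⊆ {q : ℚ | 0 ≤ q}) (ha' : ↑a'.support ⊆ {q : ℚ | 0 ≤ q})
    (g g' : ℝ → ℂ)
    (hg : Tendsto g atTop (nhds 0)) (hg' : Tendsto g' atTop (nhds 0)) :
    Tendsto (fun x : ℝ => ‖(powerSum a x + g x) - (powerSum a' x + g' x)‖)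
      atTop atTop ↔ ∃ q : ℚ, 0 < q ∧ a q ≠ a' q := by
  simpa only [powerSum_eq_rpowSum, Rat.cast_pos] using leaves_diverge_iff_general
    Rat.cast_injective a a' g g' ((hg.isBigO_one ℝ).sub (hg'.isBigO_one ℝ))
end

section
/- Non-divergent branches have pairwise non-divergent leaves (concrete form of Lemma 2 on non-divergent infinity branches): Let m ≥ 1, k ≥ 0, n ≥ 1 be naturals, and let 0 = n₀ < n₁ < ⋯ < n_k < n be naturals. Let b, b' ≥ 1 and set N = b·n and N' = b'·n. For each j ∈ Fin m let u_{0,j}, …, u_{k,j} ∈ ℂ. For each c ∈ ℂ with c^N = 1 and each j ∈ Fin m, let r_{c,j} : ℝ → ℂ be given by r_{c,j}(x) = Σ_{i=0}^{k} u_{i,j}·c^{b·n_i}·x^{1 − n_i/n} + g_{c,j}(x), where x^q is the real power and each g_{c,j} is bounded on some interval [x₀, ∞); similarly, for each d ∈ ℂ with d^{N'} = 1 let r'_{d,j}(x) = Σ_{i=0}^{k} u_{i,j}·d^{b'·n_i}·x^{1 − n_i/n} + g'_{d,j}(x) with each g'_{d,j} bounded at infinity. Then for every c with c^N = 1 there exists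 d with d^{N'} = 1 such that for every j ∈ Fin m the difference r_{c,j}(x) − r'_{d,j}(x) is bounded as x → ∞ (so the leaves indexed by c and d do not diverge), and reciprocally for every d there exists such a c. -/
/-!
The terms with positive exponent of the leaf indexed by `c` depend on `c` only through
`ζ = c ^ b`, an `n`-th root of unity. Since the field is algebraically closed, every `ζ` has a
`b'`-th root `d`, and the leaves indexed by `c` and `d` then have the same terms with positive
exponent, so their difference is bounded.
-/

open Asymptotics Filter

theorem exists_pow_eq_pow_and_pow_mul_eq_one {K : Type*} [Field K] [IsAlgClosed K]
    {b b' n : ℕ} (hb' : 0 < b') {c : K} (hc : c ^ (b * n) = 1) :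
    ∃ d : K, d ^ b' = c ^ b ∧ d ^ (b' * n) = 1 := by
  obtain ⟨d, hd⟩ := IsAlgClosed.exists_pow_nat_eq (c ^ b) hb'
  exact ⟨d, hd, by rw [pow_mul, hd, ← pow_mul, hc]⟩

theorem isBigO_one_atTop_iff {X E : Type*} [Preorder X] [IsDirectedOrder X] [Nonempty X]
    [Norm E] {f : X → E} :
    f =O[atTop] (fun _ ↦ (1 : ℝ)) ↔ ∃ x₀ C, ∀ x, x₀ ≤ x → ‖f x‖ ≤ C := by
  simp only [isBigO_one_iff, IsBoundedUnder, IsBounded, eventually_map, eventually_atTop]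
  exact exists_comm

section Branch

variable {K J X E : Type*} [SeminormedAddCommGroup E] {l : Filter X} {n b b' : ℕ}
  {r r' p : K → J → X → E}

/-- The family `r` of leaves of a branch, indexed by the `c` with `c ^ (b * n) = 1`, agrees with `p`
along `l` up to bounded terms. The coordinates of a leaf are indexed by `J`, and the principal part
`p` takes the argument `ζ = c ^ b` because conjugation replaces each coefficient `u_{i,j}` by
`u_{i,j} * ζ ^ n_i`. -/
def HasPrincipalPart [Monoid K] (l : Filter X) (n b : ℕ) (r p : K → J → X → E) : Prop :=
  ∀ c, c ^ (b * n) = 1 → ∀ j, (fun x ↦ r c j x - p (c ^ b) j x) =O[l] (fun _ ↦ (1 : ℝ))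

namespace HasPrincipalPart

theorem isBigO_one_sub_of_pow_eq [Monoid K]
    (hr : HasPrincipalPart l n b r p) (hr' : HasPrincipalPart l n b' r' p)
    {c d : K} (hc : c ^ (b * n) = 1) (hd : d ^ (b' * n) = 1) (hcd : c ^ b = d ^ b') (j : J) :
    (fun x ↦ r c j x - r' d j x) =O[l] (fun _ ↦ (1 : ℝ)) := by
  have hrp := hr c hc j
  rw [hcd] at hrp
  simpa only [sub_sub_sub_cancel_right] using hrp.sub (hr' d hd j)

theorem exists_isBigO_one_sub [Field K] [IsAlgClosed K] (hb' : 0 < b')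
    (hr : HasPrincipalPart l n b r p) (hr' : HasPrincipalPart l n b' r' p)
    {c : K} (hc : c ^ (b * n) = 1) :
    ∃ d, d ^ (b' * n) = 1 ∧ ∀ j, (fun x ↦ r c j x - r' d j x) =O[l] (fun _ ↦ (1 : ℝ)) := by
  obtain ⟨d, hdc, hd⟩ := exists_pow_eq_pow_and_pow_mul_eq_one hb' hc
  exact ⟨d, hd, hr.isBigO_one_sub_of_pow_eq hr' hc hd hdc.symm⟩

end HasPrincipalPart

theorem nondivergent_branches_leaves_matched_general [Field K] [IsAlgClosed K]
    (hb : 0 < b) (hb' : 0 < b')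
    (hr : HasPrincipalPart l n b r p) (hr' : HasPrincipalPart l n b' r' p) :
    (∀ c, c ^ (b * n) = 1 → ∃ d, d ^ (b' * n) = 1 ∧
      ∀ j, (fun x ↦ r c j x - r' d j x) =O[l] (fun _ ↦ (1 : ℝ))) ∧
    (∀ d, d ^ (b' * n) = 1 → ∃ c, c ^ (b * n) = 1 ∧
      ∀ j, (fun x ↦ r c j x - r' d j x) =O[l] (fun _ ↦ (1 : ℝ))) := by
  refine ⟨fun c hc ↦ hr.exists_isBigO_one_sub hb' hr' hc, fun d hd ↦ ?_⟩
  obtain ⟨c, hc, hdc⟩ := hr'.exists_isBigO_one_sub hb hr hd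
  exact ⟨c, hc, fun j ↦ (hdc j).symm⟩

end Branch

/-- **Non-divergent branches have pairwise non-divergent leaves** (concrete form):
the leaves of two infinity branches sharing the same positive-exponent terms
`Σ_i u_{i,j} x^{1 - n_i/n}` (up to conjugation by roots of unity `c^N = 1`,
resp. `d^{N'} = 1`, with `N = b·n`, `N' = b'·n`) can be matched: for every leaf
indexed by `c` there is a leaf indexed by `d` such that all coordinate differences
`r_{c,j} - r'_{d,j}` stay bounded at infinity, and reciprocally. -/
theorem nondivergent_branches_leaves_matched
    (m k n : ℕ) (hm : 1 ≤ m) (hn : 1 ≤ n)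
    (nseq : Fin (k + 1) → ℕ) (h0 : nseq 0 = 0) (hmono : StrictMono nseq)
    (hlt : ∀ i : Fin (k + 1), nseq i < n)
    (b b' : ℕ) (hb : 1 ≤ b) (hb' : 1 ≤ b')
    (N N' : ℕ) (hN : N = b * n) (hN' : N' = b' * n)
    (u : Fin (k + 1) → Fin m → ℂ)
    (r r' : ℂ → Fin m → ℝ → ℂ)
    (hr : ∀ c : ℂ, c ^ N = 1 → ∀ j : Fin m, ∃ x₀ C : ℝ, ∀ x : ℝ, x₀ ≤ x →
      norm (r c j x - ∑ i : Fin (k + 1),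
        u i j * c ^ (b * nseq i) * ((x ^ (1 - (nseq i : ℝ) / (n : ℝ)) : ℝ) : ℂ)) ≤ C)
    (hr' : ∀ d : ℂ, d ^ N' = 1 → ∀ j : Fin m, ∃ x₀ C : ℝ, ∀ x : ℝ, x₀ ≤ x →
      norm (r' d j x - ∑ i : Fin (k + 1),
        u i j * d ^ (b' * nseq i) * ((x ^ (1 - (nseq i : ℝ) / (n : ℝ)) : ℝ) : ℂ)) ≤ C) :
    (∀ c : ℂ, c ^ N = 1 → ∃ d : ℂ, d ^ N' = 1 ∧
      ∀ j : Fin m, ∃ x₀ C : ℝ, ∀ x : ℝ, x₀ ≤ x →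
        norm (r c j x - r' d j x) ≤ C) ∧
    (∀ d : ℂ, d ^ N' = 1 → ∃ c : ℂ, c ^ N = 1 ∧
      ∀ j : Fin m, ∃ x₀ C : ℝ, ∀ x : ℝ, x₀ ≤ x →
        norm (r c j x - r' d j x) ≤ C) := by
  subst hN hN'
  simp only [← isBigO_one_atTop_iff, pow_mul _ _ (nseq _)] at hr hr' ⊢
  exact nondivergent_branches_leaves_matched_general hb hb'
    (p := fun ζ j x ↦ ∑ i, u i j * ζ ^ nseq i * ((x ^ (1 - (nseq i : ℝ) / n) : ℝ) : ℂ)) hr hr'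
end

section
/- Divergent branches separate at infinity (Lemma 3 on divergent infinity branches, concrete form): Let m ≥ 1, let r, r' : ℂ → (Fin m → ℂ), and let δ₀, M' ∈ ℝ. Assume: (i) for every j ∈ Fin m and all x, y ∈ ℂ with |x| > δ₀ and |y| > δ₀ one has |r(x)_j − r(y)_j| ≤ |x − y|; and (ii) there exists j₀ ∈ Fin m such that |r'(y)_{j₀} − r(y)_{j₀}| → ∞ as |y| → ∞. Then for every real K > 0 there exists δ > 0 such that for all x, y ∈ ℂ with |x| > δ and |y| > M' one has |x − y| + Σ_{j ∈ Fin m} |r(x)_j − r'(y)_j| > K. -/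
open Filter

open Bornology Metric
open scoped NNReal

theorem eventually_cobounded_closedBall_subset {X : Type*} [PseudoMetricSpace X] {s : Set X}
    (hs : s ∈ cobounded X) (R : ℝ) : ∀ᶠ x in cobounded X, closedBall x R ⊆ s := by
  have h_compl : IsBounded sᶜ := isBounded_compl_iff.2 hs
  filter_upwards [isBounded_def.1 (h_compl.cthickening (δ := R))] with x hx y hy
  by_contra hys
  exact hx (mem_cthickening_of_dist_le x y R sᶜ hys (mem_closedBall'.1 hy))

theorem eventually_cobounded_forall_lt_dist_add_dist {X Y : Type*} [PseudoMetricSpace X]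
    [PseudoMetricSpace Y] {f g : X → Y} {s : Set X} {C : ℝ≥0} (hs : s ∈ cobounded X)
    (hf : LipschitzOnWith C f s)
    (hfg : Tendsto (fun y => dist (g y) (f y)) (cobounded X) atTop) (K : ℝ) :
    ∀ᶠ x in cobounded X, ∀ y, K < dist x y + dist (f x) (g y) := by
  have h_far : ∀ᶠ y in cobounded X, y ∈ s ∧ K + C * K < dist (g y) (f y) :=
    inter_mem hs (hfg.eventually_gt_atTop _)
  filter_upwards [eventually_cobounded_closedBall_subset h_far K, hs] with x hx hxs y
  -- If both distances were at most `K`, then `y` would be far out as well, and the Lipschitz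
  -- bound would keep `g y` within `K + C * K` of `f y`.
  by_contra! hK
  have h_dist : dist x y ≤ K := by linarith [dist_nonneg (x := f x) (y := g y)]
  have h_dist_image : dist (f x) (g y) ≤ K := by linarith [dist_nonneg (x := x) (y := y)]
  obtain ⟨hys, hy_far⟩ := hx (mem_closedBall'.2 h_dist)
  refine hy_far.not_ge ?_
  calc dist (g y) (f y)
      ≤ dist (f x) (g y) + dist (f x) (f y) := dist_triangle_left _ _ _
    _ ≤ dist (f x) (g y) + C * dist x y := by gcongr; exact hf.dist_le_mul x hxs y hys
    _ ≤ K + C * K := by gcongr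

theorem exists_pos_forall_of_eventually_cobounded {E : Type*} [SeminormedAddGroup E]
    {p : E → Prop} (h : ∀ᶠ x in cobounded E, p x) : ∃ δ : ℝ, 0 < δ ∧ ∀ x, δ < ‖x‖ → p x := by
  rw [← comap_norm_atTop] at h
  exact ((atTop_basis_Ioi' (0 : ℝ)).comap norm).eventually_iff.1 h

theorem divergent_branches_separate_general {E ι : Type*} {F : ι → Type*}
    [SeminormedAddCommGroup E] [Fintype ι] [∀ j, SeminormedAddCommGroup (F j)]
    {r r' : E → ∀ j, F j} {δ₀ : ℝ} {C : ℝ≥0} {j₀ : ι}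
    (hlip : ∀ x y, δ₀ < ‖x‖ → δ₀ < ‖y‖ → ‖r x j₀ - r y j₀‖ ≤ C * ‖x - y‖)
    (hdiv : Tendsto (fun y => ‖r' y j₀ - r y j₀‖) (comap norm atTop) atTop) (K : ℝ) :
    ∃ δ : ℝ, 0 < δ ∧ ∀ x, δ < ‖x‖ → ∀ y, K < ‖x - y‖ + ∑ j, ‖r x j - r' y j‖ := by
  rw [comap_norm_atTop] at hdiv
  simp only [← dist_eq_norm] at hlip hdiv ⊢
  have h_dom : {x : E | δ₀ < ‖x‖} ∈ cobounded E :=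
    tendsto_norm_cobounded_atTop.eventually_gt_atTop δ₀
  have h_lip : LipschitzOnWith C (fun x => r x j₀) {x | δ₀ < ‖x‖} :=
    .of_dist_le_mul fun x hx y hy => hlip x y hx hy
  apply exists_pos_forall_of_eventually_cobounded
  filter_upwards [eventually_cobounded_forall_lt_dist_add_dist h_dom h_lip hdiv K] with x hx y
  have h_coord : dist (r x j₀) (r' y j₀) ≤ ∑ j, dist (r x j) (r' y j) :=
    Finset.single_le_sum (f := fun j => dist (r x j) (r' y j))
      (fun _ _ => dist_nonneg) (Finset.mem_univ j₀)
  exact (hx y).trans_le (by gcongr)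

/-- **Divergent branches separate at infinity** (Lemma 3, concrete form):
if each coordinate of the parametrization `r` of a branch is `1`-Lipschitz far from
the origin, and some coordinate of `r' - r` tends to `∞` in modulus, then for every
`K > 0` points `(x, r(x))` with `|x|` large enough are at distance `> K`
(in the norm `|x - y| + Σ_j |r(x)_j - r'(y)_j|`) from every point `(y, r'(y))`
of the other branch. -/
theorem divergent_branches_separate
    (m : ℕ) (hm : 1 ≤ m)
    (r r' : ℂ → (Fin m → ℂ)) (δ₀ M' : ℝ)
    (hlip : ∀ (j : Fin m) (x y : ℂ), δ₀ < ‖x‖ → δ₀ < ‖y‖ →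
      ‖r x j - r y j‖ ≤ ‖x - y‖)
    (hdiv : ∃ j₀ : Fin m,
      Tendsto (fun y : ℂ => ‖r' y j₀ - r y j₀‖)
        (Filter.comap (norm : ℂ → ℝ) atTop) atTop) :
    ∀ K : ℝ, 0 < K → ∃ δ : ℝ, 0 < δ ∧ ∀ x y : ℂ,
      δ < ‖x‖ → M' < ‖y‖ →
      K < ‖x - y‖ + ∑ j : Fin m, ‖r x j - r' y j‖ := by
  obtain ⟨j₀, hj₀⟩ := hdiv
  exact fun K _ => (divergent_branches_separate_general (C := 1) (by simpa using hlip j₀) hj₀ K).imp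
    fun _ ⟨hδ, h⟩ => ⟨hδ, fun x y hx _ => h x hx y⟩
end

section
/- Limits of curve points yield infinity points (key step of the lemma that points with large coordinates lie on infinity branches): Let n ≥ 1, let F be a homogeneous polynomial in n+1 variables over ℂ (an element of MvPolynomial (Fin (n+1)) ℂ that is homogeneous of some degree d), and let (a_κ)_{κ∈ℕ} be a sequence in Fin n → ℂ such that for every κ: F(a_κ(0), a_κ(1), …, a_κ(n−1), 1) = 0 and a_κ(0) ≠ 0. Assume |a_κ(0)| → ∞ as κ → ∞ and that for each i with 1 ≤ i ≤ n−1 the ratio a_κ(i)/a_κ(0) converges to some m_i ∈ ℂ. Then F(1, m_1, …, m_{n−1}, 0) = 0. -/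
/-!
The zero set of a homogeneous polynomial is closed and stable under scaling. Rescaling the points
`(a_κ, 1)` by `1 / a_κ(0)` keeps them in this set, and as `a_κ(0)` tends to infinity the rescaled
points converge to `(1, m_1, …, m_{n-1}, 0)`.
-/

open Filter MvPolynomial Topology

theorem eval_smul_of_isHomogeneous {σ R : Type*} [CommSemiring R] {F : MvPolynomial σ R} {d : ℕ}
    (hF : F.IsHomogeneous d) (c : R) (v : σ → R) : eval (c • v) F = c ^ d * eval v F := by
  rw [eval_eq, eval_eq, Finset.mul_sum]
  refine Finset.sum_congr rfl fun m hm => ?_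
  have prod_smul : ∏ i ∈ m.support, (c • v) i ^ m i = c ^ d * ∏ i ∈ m.support, v i ^ m i := by
    simp only [Pi.smul_apply, smul_eq_mul, mul_pow, Finset.prod_mul_distrib,
      Finset.prod_pow_eq_pow_sum, hF.degree_eq_sum_deg_support hm]
  rw [prod_smul, mul_left_comm]

theorem eval_eq_zero_of_tendsto_smul {σ R ι : Type*} [CommSemiring R] [TopologicalSpace R]
    [IsTopologicalSemiring R] [T1Space R] {F : MvPolynomial σ R} {d : ℕ}
    (hF : F.IsHomogeneous d) {l : Filter ι} {c : ι → R} {v : ι → σ → R} {w : σ → R}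
    (hzero : ∃ᶠ κ in l, eval (v κ) F = 0) (hlim : Tendsto (fun κ => c κ • v κ) l (𝓝 w)) :
    eval w F = 0 := by
  have isClosed_zeros : IsClosed {x : σ → R | eval x F = 0} :=
    isClosed_singleton.preimage (continuous_eval F)
  refine isClosed_zeros.mem_of_frequently_of_tendsto (hzero.mono fun κ hκ => ?_) hlim
  rw [Set.mem_ofPred_eq, eval_smul_of_isHomogeneous hF, hκ, mul_zero]

theorem tendsto_inv_smul_update_one {σ 𝕜 ι : Type*} [DecidableEq σ] [CommGroupWithZero 𝕜]
    [TopologicalSpace 𝕜] {l : Filter ι} {a : ι → σ → 𝕜} {i₀ : σ} {μ : σ → 𝕜}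
    (hne : ∀ᶠ κ in l, a κ i₀ ≠ 0)
    (hlim : ∀ i ≠ i₀, Tendsto (fun κ => a κ i / a κ i₀) l (𝓝 (μ i))) :
    Tendsto (fun κ => (a κ i₀)⁻¹ • a κ) l (𝓝 (Function.update μ i₀ 1)) := by
  simp only [tendsto_pi_nhds, Pi.smul_apply, smul_eq_mul, ← div_eq_inv_mul]
  intro i
  obtain rfl | hi := eq_or_ne i i₀
  · rw [Function.update_self]
    exact tendsto_const_nhds.congr' (hne.mono fun κ hκ => (div_self hκ).symm)
  · rw [Function.update_of_ne hi]
    exact hlim i hi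

theorem smul_snoc {M α : Type*} [SMul M α] {n : ℕ} (c : M) (v : Fin n → α) (x : α) :
    c • (Fin.snoc v x : Fin (n + 1) → α) = Fin.snoc (c • v) (c • x) :=
  Fin.comp_snoc (c • ·) v x

theorem update_zero_eq_ite {α : Type*} {n : ℕ} (hn : 0 < n) (f : Fin n → α) (x : α) :
    Function.update f ⟨0, hn⟩ x = fun i : Fin n => if (i : ℕ) = 0 then x else f i := by
  ext i
  simp only [Function.update_apply, Fin.ext_iff]

theorem limit_infinity_point_general {𝕜 ι : Type*} [NormedField 𝕜] {n d : ℕ}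
    {F : MvPolynomial (Fin (n + 1)) 𝕜} (hF : F.IsHomogeneous d) {l : Filter ι}
    {a : ι → Fin n → 𝕜} {i₀ : Fin n} {μ : Fin n → 𝕜}
    (hzero : ∃ᶠ κ in l, eval (Fin.snoc (a κ) (1 : 𝕜)) F = 0)
    (hinf : Tendsto (fun κ => a κ i₀) l (Bornology.cobounded 𝕜))
    (hlim : ∀ i ≠ i₀, Tendsto (fun κ => a κ i / a κ i₀) l (𝓝 (μ i))) :
    eval (Fin.snoc (Function.update μ i₀ 1) (0 : 𝕜)) F = 0 := by
  have affine_part : Tendsto (fun κ => (a κ i₀)⁻¹ • a κ) l (𝓝 (Function.update μ i₀ 1)) :=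
    tendsto_inv_smul_update_one (hinf.eventually_ne_cobounded 0) hlim
  have last_coord : Tendsto (fun κ => (a κ i₀)⁻¹ • (1 : 𝕜)) l (𝓝 0) := by
    simpa only [smul_eq_mul, mul_one, Function.comp_def] using tendsto_inv₀_cobounded.comp hinf
  refine eval_eq_zero_of_tendsto_smul hF (c := fun κ => (a κ i₀)⁻¹) hzero ?_
  simp only [smul_snoc]
  exact affine_part.finSnoc last_coord

/-- **Limits of curve points yield infinity points**: if a sequence of points
`(a_κ(0), …, a_κ(n-1))` lies on the zero set of the homogeneous polynomial `F`
(dehomogenized at `1`), the first coordinate tends to infinity in modulus, and the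
ratios `a_κ(i)/a_κ(0)` converge to `m_i`, then `(1 : m_1 : ⋯ : m_{n-1} : 0)` is a
zero of `F`, i.e. an infinity point of the projective curve. -/
theorem limit_infinity_point
    (n : ℕ) (hn : 1 ≤ n) (d : ℕ)
    (F : MvPolynomial (Fin (n + 1)) ℂ) (hF : F.IsHomogeneous d)
    (a : ℕ → Fin n → ℂ)
    (hzero : ∀ κ : ℕ, MvPolynomial.eval (Fin.snoc (a κ) (1 : ℂ)) F = 0)
    (hne : ∀ κ : ℕ, a κ ⟨0, hn⟩ ≠ 0)
    (habs : Filter.Tendsto (fun κ : ℕ => ‖a κ ⟨0, hn⟩‖)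
      Filter.atTop Filter.atTop)
    (μ : Fin n → ℂ)
    (hlim : ∀ i : Fin n, 0 < (i : ℕ) →
      Filter.Tendsto (fun κ : ℕ => a κ i / a κ ⟨0, hn⟩) Filter.atTop (nhds (μ i))) :
    MvPolynomial.eval
      (Fin.snoc (fun i : Fin n => if (i : ℕ) = 0 then 1 else μ i) (0 : ℂ)) F = 0 := by
  rw [← update_zero_eq_ite hn]
  exact limit_infinity_point_general hF (Frequently.of_forall hzero)
    (tendsto_norm_atTop_iff_cobounded.mp habs)
    fun i hi => hlim i (Nat.pos_of_ne_zero fun h => hi (Fin.ext h))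
end
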